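/- arXiv:2205.09371 — 2 statements merged into one kernel-verified Lean document; each statement's English description precedes it below -/
import Mathlib

section
/- Let R be a commutative ring, M a finitely generated projective R-module, and φ : M → M an R-linear endomorphism. Let I ⊆ R be the ideal generated by all elements λ(φ(m)) with λ ∈ Hom_R(M, R) and m ∈ M. Then for every commutative R-algebra A, the base-changed endomorphism φ ⊗ id_A : M ⊗_R A → M ⊗_R A is the zero map if and only if every element of I maps to 0 under the structure homomorphism R → A. -/
/-!
A finitely generated projective module is a direct summand of some `Rⁿ`, so it has a finite dual
basis: `x = ∑ i, lᵢ x • eᵢ` with linear forms `lᵢ`. Hence `1 ⊗ φ m = ∑ i, lᵢ (φ m) • (1 ⊗ eᵢ)`, and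
this vanishes as soon as the elements `lᵢ (φ m)` of `I` die in `A`. Conversely, applying
`id_A ⊗ l : A ⊗ M → A ⊗ R = A` to `1 ⊗ φ m = 0` shows that `l (φ m)` maps to `0` in `A`.
-/

open scoped TensorProduct

/-- Let `R` be a commutative ring, `M` a finitely generated projective `R`-module, and
`φ : M → M` an `R`-linear endomorphism.  Let `I ⊆ R` be the ideal generated by all elements
`l (φ m)` with `l ∈ Hom_R(M, R)` and `m ∈ M`.  Then for every commutative `R`-algebra `A`,
the base-changed endomorphism `φ ⊗ id_A : M ⊗[R] A → M ⊗[R] A` is zero if and only if every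
element of `I` maps to `0` under the structure homomorphism `R → A`. -/
theorem stmt1 {R : Type*} [CommRing R] {M : Type*} [AddCommGroup M] [Module R M]
    [Module.Finite R M] [Module.Projective R M]
    (φ : M →ₗ[R] M) (I : Ideal R)
    (hI : I = Ideal.span {x : R | ∃ (l : M →ₗ[R] R) (m : M), x = l (φ m)}) :
    ∀ (A : Type*) [CommRing A] [Algebra R A],
      LinearMap.baseChange A φ = 0 ↔ ∀ x ∈ I, algebraMap R A x = 0 := by
  intro A _ _
  subst hI
  constructor
  · intro h x hx
    -- It suffices to treat the generators of the ideal, the kernel of `R → A` being an ideal.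
    refine (Ideal.span_le (I := RingHom.ker (algebraMap R A))).2 ?_ hx
    rintro _ ⟨l, m, rfl⟩
    have h1 : LinearMap.baseChange A φ (1 ⊗ₜ[R] m) = 0 := by rw [h, LinearMap.zero_apply]
    have h2 := congrArg (fun t => TensorProduct.rid R A (l.lTensor A t)) h1
    simpa [Algebra.algebraMap_eq_smul_one] using h2
  · intro h
    obtain ⟨n, f, g, -, -, hfg⟩ := Module.Finite.exists_comp_eq_id_of_projective R M
    ext m
    -- The coordinates `g (φ m) i` are values of the linear forms `proj i ∘ g` on `φ m`.
    have hc : ∀ i, algebraMap R A (g (φ m) i) = 0 := fun i =>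
      h _ (Ideal.subset_span ⟨LinearMap.proj i ∘ₗ g, m, rfl⟩)
    have hm : φ m = ∑ i, g (φ m) i • f (Pi.single i 1) := by
      conv_lhs => rw [← LinearMap.id_apply (R := R) (φ m), ← hfg, LinearMap.comp_apply,
        pi_eq_sum_univ' (g (φ m))]
      simp [map_sum]
    suffices (1 : A) ⊗ₜ[R] φ m = 0 by simpa using this
    rw [hm, TensorProduct.tmul_sum]
    refine Finset.sum_eq_zero fun i _ => ?_
    rw [← TensorProduct.smul_tmul, ← Algebra.algebraMap_eq_smul_one, hc,
      TensorProduct.zero_tmul]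
end

section
/- Let R be a commutative ring, n ≥ 1 an integer, and S = R[X]/(Xⁿ). Let M be an S-module which, when regarded as an R-module via R ⊆ S, is free of rank n. Let p be a prime ideal of R with residue field κ(p), and suppose that the κ(p)-vector space (M/XM) ⊗_R κ(p) is one-dimensional. Then there exists a ∈ R ∖ p such that the localization M_a is a free module of rank 1 over S_a = R_a[X]/(Xⁿ). Consequently, the set of primes p of R at which M is locally free of rank 1 over S is open in Spec R. -/
/-!
Choose `m : M` such that `1 ⊗ m` spans the line `κ(p) ⊗ (M/XM)`, and let `φ : S → M` be `s ↦ s • m`.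
Since `X` is nilpotent, Nakayama's lemma holds on `κ(p) ⊗ M` without any local hypothesis, so
`κ(p) ⊗ φ` is surjective. As `S` and `M` are both `R`-free of rank `n`, the determinant `a` of a
matrix of `φ` is then nonzero in `κ(p)`, that is `a ∉ p`. The adjugate matrix inverts `φ` up to `a`,
so `φ` becomes an isomorphism after inverting `a`. The openness statement holds because the
set in question is a union of basic open sets.
-/

open Polynomial TensorProduct

/-- The truncated polynomial ring `S = R[X]/(Xⁿ)`. -/
abbrev TruncatedPoly (R : Type*) [CommRing R] (n : ℕ) : Type _ :=
  Polynomial R ⧸ Ideal.span {(X : Polynomial R) ^ n}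

/-- The image of `X` in `R[X]/(Xⁿ)`. -/
noncomputable def truncX (R : Type*) [CommRing R] (n : ℕ) : TruncatedPoly R n :=
  Ideal.Quotient.mk _ X

/-- The localization `M_a` of a module `M` over a commutative ring `A` at the powers of an
element `a ∈ A` is a free module of rank `1` over the localized ring `A_a`. -/
noncomputable def LocalizedFreeOfRankOne {A : Type*} [CommRing A] (a : A)
    (M : Type*) [AddCommGroup M] [Module A M] : Prop :=
  Module.Free (Localization (Submonoid.powers a))
      (LocalizedModule (Submonoid.powers a) M) ∧
    Module.finrank (Localization (Submonoid.powers a))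
      (LocalizedModule (Submonoid.powers a) M) = 1

/-- Nakayama's lemma for a nilpotent endomorphism `x`: an `x`-stable submodule `U` with
`U + xT = T` is all of `T`. Iterating gives `T = U + xᵏT` for every `k`. -/
lemma eq_top_of_nilpotent_of_sup {K T : Type*} [CommRing K] [AddCommGroup T] [Module K T]
    (x : T →ₗ[K] T) (n : ℕ) (hx : x ^ n = 0) (U : Submodule K T) (hU : ∀ u ∈ U, x u ∈ U)
    (h : ∀ t, ∃ u ∈ U, ∃ t', t = u + x t') : U = ⊤ := by
  have key : ∀ k : ℕ, ∀ t, ∃ u ∈ U, ∃ t', t = u + (x ^ k) t' := by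
    intro k
    induction k with
    | zero => exact fun t => ⟨0, U.zero_mem, t, by simp⟩
    | succ k ih =>
      intro t
      obtain ⟨u, hu, t', rfl⟩ := h t
      obtain ⟨v, hv, t'', rfl⟩ := ih t'
      refine ⟨u + x v, U.add_mem hu (hU v hv), t'', ?_⟩
      rw [pow_succ', Module.End.mul_apply, map_add, add_assoc]
  refine eq_top_iff.2 fun t _ => ?_
  obtain ⟨u, hu, t', rfl⟩ := key n t
  simpa [hx] using hu

/-- If `s ↦ s • m` has a two-sided inverse up to the factor `a`, then `m` freely generates the
localization of `M` at `a`. -/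
lemma localizedFreeOfRankOne_of_quasiInverse {A M : Type*} [CommRing A] [AddCommGroup M]
    [Module A M] (a : A) (ha : ¬ IsNilpotent a) (m : M) (ψ : M → A)
    (h₁ : ∀ s : A, s • m = 0 → a * s = 0) (h₂ : ∀ x : M, ψ x • m = a • x) :
    LocalizedFreeOfRankOne a M := by
  let P := Submonoid.powers a
  have hnt : Nontrivial (Localization P) := by
    rw [← not_subsingleton_iff_nontrivial]
    intro hs
    have := (IsLocalization.subsingleton_iff (M := P)).1 hs
    obtain ⟨k, hk⟩ := this
    exact ha ⟨k, hk⟩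
  let g : Localization P →ₗ[Localization P] LocalizedModule P M :=
    LinearMap.toSpanSingleton _ _ (LocalizedModule.mk m 1)
  have hg : ∀ (s : A) (t : P), g (Localization.mk s t) = LocalizedModule.mk (s • m) t := by
    intro s t
    simp [g, LocalizedModule.mk_smul_mk]
  have hbij : Function.Bijective g := by
    constructor
    · rw [injective_iff_map_eq_zero]
      intro z hz
      induction z using Localization.induction_on with
      | H y =>
      obtain ⟨s, t⟩ := y
      rw [hg, ← LocalizedModule.zero_mk 1, LocalizedModule.mk_eq] at hz
      obtain ⟨c, hc⟩ := hz
      have hc' : (c : A) • s • m = 0 := by simpa [Submonoid.smul_def] using hc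
      rw [← mul_smul] at hc'
      have := h₁ _ hc'
      rw [Localization.mk_eq_mk', IsLocalization.mk'_eq_zero_iff]
      exact ⟨⟨a, Submonoid.mem_powers a⟩ * c, by
        rw [Submonoid.coe_mul, mul_assoc]; exact this⟩
    · intro z
      induction z using LocalizedModule.induction_on with
      | h x t =>
      refine ⟨Localization.mk (ψ x) (⟨a, Submonoid.mem_powers a⟩ * t), ?_⟩
      rw [hg, h₂]
      exact LocalizedModule.mk_cancel_common_left ⟨a, Submonoid.mem_powers a⟩ t x
  let e := LinearEquiv.ofBijective g hbij
  exact ⟨Module.Free.of_equiv e, by rw [← e.finrank_eq, Module.finrank_self]⟩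

lemma truncX_pow (R : Type*) [CommRing R] (n : ℕ) : truncX R n ^ n = 0 := by
  rw [truncX, ← map_pow, Ideal.Quotient.eq_zero_iff_mem]
  exact Ideal.mem_span_singleton_self _

/-- The basis `1, X, …, Xⁿ⁻¹` of `R[X]/(Xⁿ)`. -/
noncomputable def truncBasis (R : Type*) [CommRing R] [Nontrivial R] (n : ℕ) :
    Module.Basis (Fin n) R (TruncatedPoly R n) :=
  (AdjoinRoot.powerBasis' (monic_X_pow (R := R) n)).basis.reindex
    (finCongr (by simp))

/-- If `1 ⊗ m` spans the fibre of `M/XM` over a field `K`, then `s ↦ s • m` is surjective on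
the fibres over `K`. -/
lemma baseChange_toSpanSingleton_surjective {R K : Type*} [CommRing R] [Field K] [Algebra R K]
    (n : ℕ) {M : Type*} [AddCommGroup M] [Module (TruncatedPoly R n) M]
    [Module R M] [IsScalarTower R (TruncatedPoly R n) M] (m : M)
    (hm : ∀ w : K ⊗[R] (M ⧸ LinearMap.range
      ((LinearMap.lsmul (TruncatedPoly R n) M (truncX R n)).restrictScalars R)),
      ∃ c : K, c • (1 ⊗ₜ[R] Submodule.Quotient.mk m) = w) :
    Function.Surjective
      (((LinearMap.toSpanSingleton (TruncatedPoly R n) M m).restrictScalars R).baseChange K) := by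
  set x : M →ₗ[R] M := (LinearMap.lsmul (TruncatedPoly R n) M (truncX R n)).restrictScalars R
    with hx
  set φ := (LinearMap.toSpanSingleton (TruncatedPoly R n) M m).restrictScalars R with hφ
  have hxn : x ^ n = 0 := by
    have : ∀ k : ℕ, ∀ y : M, (x ^ k) y = (truncX R n ^ k) • y := by
      intro k
      induction k with
      | zero => simp
      | succ k ih =>
        intro y
        rw [pow_succ', Module.End.mul_apply, ih, pow_succ', mul_smul]
        rfl
    ext y
    rw [this, truncX_pow, LinearMap.zero_apply]
    exact zero_smul (TruncatedPoly R n) y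
  rw [← LinearMap.range_eq_top]
  refine eq_top_of_nilpotent_of_sup (x.baseChange K) n ?_ _ ?_ ?_
  · rw [← LinearMap.baseChange_pow, hxn, LinearMap.baseChange_zero]
  · rintro _ ⟨s, rfl⟩
    induction s using TensorProduct.induction_on with
    | zero => simp
    | add s t hs ht => rw [map_add, map_add]; exact Submodule.add_mem _ hs ht
    | tmul c s =>
      refine ⟨c ⊗ₜ (truncX R n * s), ?_⟩
      simp [hφ, hx, mul_smul, smul_comm s]
  · intro t
    obtain ⟨c, hc⟩ := hm ((LinearMap.range x).mkQ.lTensor K t)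
    -- Right exactness: the kernel of `K ⊗ M → K ⊗ (M/XM)` is the range of `K ⊗ x`.
    have hex := lTensor_exact K (f := x) (g := (LinearMap.range x).mkQ)
      (LinearMap.exact_map_mkQ_range x) (Submodule.mkQ_surjective _)
    have h0 : (LinearMap.range x).mkQ.lTensor K (t - c ⊗ₜ m) = 0 := by
      rw [map_sub, ← hc, LinearMap.lTensor_tmul, Submodule.mkQ_apply, TensorProduct.smul_tmul',
        smul_eq_mul, mul_one, sub_self]
    obtain ⟨t', ht'⟩ := (hex _).1 h0
    refine ⟨c ⊗ₜ m, ⟨c ⊗ₜ 1, by simp [hφ]⟩, t', ?_⟩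
    change x.baseChange K t' = _ at ht'
    rw [ht', add_sub_cancel]

/-- A linear map between free modules of the same rank that becomes surjective over a field `K`
has nonzero determinant in `K`, because over `K` it is then bijective. -/
lemma det_ne_zero_of_baseChange_surjective {R K N M : Type*} [CommRing R] [Field K] [Algebra R K]
    [AddCommGroup N] [Module R N] [AddCommGroup M] [Module R M] {n : ℕ}
    (bN : Module.Basis (Fin n) R N) (bM : Module.Basis (Fin n) R M) (φ : N →ₗ[R] M)
    (h : Function.Surjective (φ.baseChange K)) :
    algebraMap R K (LinearMap.toMatrix bN bM φ).det ≠ 0 := by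
  let cN := Algebra.TensorProduct.basis K bN
  let cM := Algebra.TensorProduct.basis K bM
  have : Module.Finite K (K ⊗[R] N) := Module.Finite.of_basis cN
  have : Module.Finite K (K ⊗[R] M) := Module.Finite.of_basis cM
  have hinj : Function.Injective (φ.baseChange K) :=
    (LinearMap.injective_iff_surjective_of_finrank_eq_finrank
      (cN.equiv cM (Equiv.refl _)).finrank_eq).2 h
  have hu := LinearEquiv.isUnit_det (LinearEquiv.ofBijective (φ.baseChange K) ⟨hinj, h⟩) cN cM
  have hcoe : (LinearEquiv.ofBijective (φ.baseChange K) ⟨hinj, h⟩).toLinearMap =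
    φ.baseChange K := rfl
  rw [hcoe, LinearMap.toMatrix_baseChange, ← RingHom.mapMatrix_apply, ← RingHom.map_det] at hu
  exact hu.ne_zero

/-- Let `R` be a commutative ring, `n ≥ 1`, and `S = R[X]/(Xⁿ)`.  Let `M` be an `S`-module
which, as an `R`-module, is free of rank `n`.  If `p` is a prime ideal of `R` such that
`(M/XM) ⊗[R] κ(p)` is one-dimensional over the residue field `κ(p)`, then there is
`a ∈ R ∖ p` such that the localization `M_a` is free of rank `1` over
`S_a = R_a[X]/(Xⁿ)`.  Consequently, the set of primes of `R` at which `M` is locally free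
of rank `1` over `S` is open in `Spec R`. -/
theorem stmt3 {R : Type*} [CommRing R] (n : ℕ) (hn : 1 ≤ n)
    (M : Type*) [AddCommGroup M] [Module (TruncatedPoly R n) M]
    [Module R M] [IsScalarTower R (TruncatedPoly R n) M]
    [Module.Finite R M] [Module.Free R M] (hrank : Module.finrank R M = n) :
    (∀ (p : Ideal R) [p.IsPrime],
      Module.finrank (IsLocalRing.ResidueField (Localization.AtPrime p))
        (IsLocalRing.ResidueField (Localization.AtPrime p) ⊗[R]
          (M ⧸ LinearMap.range
            ((LinearMap.lsmul (TruncatedPoly R n) M (truncX R n)).restrictScalars R))) = 1 →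
      ∃ a : R, a ∉ p ∧
        LocalizedFreeOfRankOne (algebraMap R (TruncatedPoly R n) a) M) ∧
    IsOpen {p : PrimeSpectrum R | ∃ a : R, a ∉ p.asIdeal ∧
        LocalizedFreeOfRankOne (algebraMap R (TruncatedPoly R n) a) M} := by
  refine ⟨fun p _ hp => ?_, ?_⟩
  · have hR : Nontrivial R := ⟨0, 1, fun h => Ideal.IsPrime.ne_top ‹p.IsPrime›
      ((Ideal.eq_top_iff_one p).2 (h ▸ p.zero_mem))⟩
    have hm : ∃ m : M, (1 : p.ResidueField) ⊗ₜ[R] (Submodule.Quotient.mk m : M ⧸ LinearMap.range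
        ((LinearMap.lsmul (TruncatedPoly R n) M (truncX R n)).restrictScalars R)) ≠ 0 := by
      by_contra! h
      have h0 : ∀ w : p.ResidueField ⊗[R] (M ⧸ LinearMap.range
          ((LinearMap.lsmul (TruncatedPoly R n) M (truncX R n)).restrictScalars R)), w = 0 := by
        intro w
        induction w using TensorProduct.induction_on with
        | zero => rfl
        | add s t hs ht => rw [hs, ht, add_zero]
        | tmul c y =>
          obtain ⟨y, rfl⟩ := Submodule.Quotient.mk_surjective _ y
          rw [← mul_one c, ← smul_eq_mul, ← TensorProduct.smul_tmul', h, smul_zero]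
      have := subsingleton_of_forall_eq _ h0
      rw [Module.finrank_zero_of_subsingleton] at hp
      exact zero_ne_one hp
    obtain ⟨m, hm⟩ := hm
    have hsurj := baseChange_toSpanSingleton_surjective (K := p.ResidueField) n m
      ((finrank_eq_one_iff_of_nonzero' _ hm).1 hp)
    set φ := (LinearMap.toSpanSingleton (TruncatedPoly R n) M m).restrictScalars R with hφ
    let bS := truncBasis R n
    let bM : Module.Basis (Fin n) R M := Module.finBasisOfFinrankEq R M hrank
    let A := LinearMap.toMatrix bS bM φ
    have hdet : A.det ∉ p := fun hmem =>
      det_ne_zero_of_baseChange_surjective bS bM φ hsurj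
        (Ideal.algebraMap_residueField_eq_zero.2 hmem)
    let ψ := Matrix.toLin bM bS A.adjugate
    have hφA : φ = Matrix.toLin bS bM A := (Matrix.toLin_toMatrix _ _ _).symm
    have hψφ : ∀ s, ψ (φ s) = A.det • s := fun s => by
      rw [hφA, ← LinearMap.comp_apply, ← Matrix.toLin_mul, Matrix.adjugate_mul, map_smul,
        Matrix.toLin_one, LinearMap.smul_apply, LinearMap.id_apply]
    have hφψ : ∀ y, φ (ψ y) = A.det • y := fun y => by
      rw [hφA, ← LinearMap.comp_apply, ← Matrix.toLin_mul, Matrix.mul_adjugate, map_smul,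
        Matrix.toLin_one, LinearMap.smul_apply, LinearMap.id_apply]
    refine ⟨A.det, hdet, localizedFreeOfRankOne_of_quasiInverse _ ?_ m ψ ?_ ?_⟩
    -- `R → R[X]/(Xⁿ)` is injective because `n ≥ 1`, so a nilpotent determinant would lie in `p`.
    · rintro ⟨k, hk⟩
      rw [← map_pow, Algebra.algebraMap_eq_smul_one] at hk
      have hinj : ∀ r : R, r • (1 : TruncatedPoly R n) = 0 → r = 0 := by
        intro r hr
        have h : r • bS ⟨0, hn⟩ = 0 := by
          rw [← one_mul (bS _), ← smul_mul_assoc, hr, zero_mul]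
        simpa using congrArg (fun z => bS.repr z ⟨0, hn⟩) h
      exact hdet (Ideal.IsPrime.mem_of_pow_mem ‹_› k (hinj _ hk ▸ p.zero_mem))
    · intro s hs
      rw [← Algebra.smul_def, ← hψφ]
      change ψ (s • m) = 0
      rw [hs, map_zero]
    · intro y
      rw [algebraMap_smul]
      exact hφψ y
  · rw [isOpen_iff_forall_mem_open]
    rintro p ⟨a, hap, ha⟩
    exact ⟨PrimeSpectrum.basicOpen a, fun q hq => ⟨a, hq, ha⟩, (PrimeSpectrum.basicOpen a).2, hap⟩
end
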